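/- Let k be a field, T = {(x,y) ∈ ℝ² : x + y > 0} the strictly upper-triangular subposet of ℝ², and M : T → Vec_k a pointwise finite-dimensional, middle exact, indecomposable persistence module. Suppose there exist a = (x,y), b = (x,y'), c = (x',y) in T with x ≤ x', y ≤ y' and Ker(M_{ba}) ∩ Ker(M_{ca}) ≠ 0. Then M ≅ k_{I ∩ T} for a block I ⊆ ℝ² of type (db), i.e., I = J_S × J_T with J_S, J_T ⊆ ℝ interval ideals. -/

import Mathlib

namespace PMod

variable (k : Type) [Field k]

/-- A persistence module over a preordered set `P` with values in `k`-vector spaces. -/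
structure PersistenceModule (P : Type) [Preorder P] where
  V : P → Type
  [addCommGroup : ∀ x, AddCommGroup (V x)]
  [module : ∀ x, Module k (V x)]
  map : ∀ {x y : P}, x ≤ y → (V x →ₗ[k] V y)
  map_refl : ∀ x : P, map (le_refl x) = LinearMap.id
  map_trans : ∀ {x y z : P} (hxy : x ≤ y) (hyz : y ≤ z),
      map (le_trans hxy hyz) = (map hyz).comp (map hxy)

attribute [instance] PersistenceModule.addCommGroup PersistenceModule.module

variable {k}

/-- A morphism of persistence modules. -/
structure Hom {P : Type} [Preorder P] (M N : PersistenceModule k P) where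
  app : ∀ x, M.V x →ₗ[k] N.V x
  natural : ∀ {x y : P} (h : x ≤ y), (N.map h).comp (app x) = (app y).comp (M.map h)

/-- A morphism of persistence modules is an isomorphism iff it is pointwise bijective. -/
def IsIsoHom {P : Type} [Preorder P] {M N : PersistenceModule k P} (f : Hom M N) : Prop :=
  ∀ x, Function.Bijective (f.app x)

/-- Two persistence modules are isomorphic if there is a pointwise bijective
morphism between them. -/
def Isomorphic {P : Type} [Preorder P] (M N : PersistenceModule k P) : Prop :=
  ∃ f : Hom M N, IsIsoHom f

/-- The direct sum of a family of persistence modules, taken pointwise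
(`Π₀` is the finitely supported product, i.e. the direct sum). -/
noncomputable def directSum {P : Type} [Preorder P] {ι : Type}
    (N : ι → PersistenceModule k P) : PersistenceModule k P where
  V x := Π₀ i, (N i).V x
  map {x y} h := DFinsupp.mapRange.linearMap (fun i => (N i).map h)
  map_refl x := by
    have h : (fun i => (N i).map (le_refl x)) =
        fun i => (LinearMap.id : (N i).V x →ₗ[k] (N i).V x) :=
      funext fun i => (N i).map_refl x
    rw [h]
    exact DFinsupp.mapRange.linearMap_id
  map_trans {x y z} hxy hyz := by
    have h : (fun i => (N i).map (le_trans hxy hyz)) =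
        fun i => ((N i).map hyz).comp ((N i).map hxy) :=
      funext fun i => (N i).map_trans hxy hyz
    rw [h]
    exact DFinsupp.mapRange.linearMap_comp _ _

/-- The binary direct sum of two persistence modules, taken pointwise. -/
def sum2 {P : Type} [Preorder P] (M N : PersistenceModule k P) : PersistenceModule k P where
  V x := M.V x × N.V x
  map h := (M.map h).prodMap (N.map h)
  map_refl x := by
    rw [M.map_refl, N.map_refl]
    exact LinearMap.prodMap_id
  map_trans hxy hyz := by
    rw [M.map_trans hxy hyz, N.map_trans hxy hyz]
    exact (LinearMap.prodMap_comp _ _ _ _).symm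

/-- The zero persistence module predicate. -/
def IsZero {P : Type} [Preorder P] (M : PersistenceModule k P) : Prop :=
  ∀ x, ∀ v : M.V x, v = 0

/-- A persistence module is indecomposable if it is nonzero and whenever it is
isomorphic to a direct sum of two modules, one of the summands is zero. -/
def Indecomposable {P : Type} [Preorder P] (M : PersistenceModule k P) : Prop :=
  ¬ IsZero M ∧ ∀ M' M'' : PersistenceModule k P,
    Isomorphic M (sum2 M' M'') → IsZero M' ∨ IsZero M''

variable (k)

/-- A subset of a preordered set is convex. -/
def IsConvex {P : Type} [Preorder P] (I : Set P) : Prop :=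
  ∀ p q r : P, p ≤ q → q ≤ r → p ∈ I → r ∈ I → q ∈ I

open Classical in
/-- The fibre of the interval module `k_I` at `x`: a copy of `k` if `x ∈ I`, else `0`. -/
noncomputable def kMod {P : Type} [Preorder P] (I : Set P) (x : P) : Submodule k k :=
  if x ∈ I then ⊤ else ⊥

/-- The canonical generator of the fibre of the interval module at a point of `I`. -/
noncomputable def kGen {P : Type} [Preorder P] {I : Set P} {x : P} (hx : x ∈ I) :
    kMod k I x :=
  ⟨1, by simp [kMod, hx]⟩

open Classical in
/-- The structure maps of the interval module. -/
noncomputable def intervalMap {P : Type} [Preorder P] (I : Set P) {x y : P} (_ : x ≤ y) :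
    kMod k I x →ₗ[k] kMod k I y where
  toFun m := if hy : y ∈ I then ⟨(m : k), by simp [kMod, hy]⟩ else 0
  map_add' a b := by
    by_cases hy : y ∈ I <;> simp [hy]
  map_smul' c a := by
    by_cases hy : y ∈ I <;> simp [hy]

theorem kMod_coe_eq_zero {P : Type} [Preorder P] {I : Set P} {x : P} (hx : x ∉ I)
    (m : kMod k I x) : (m : k) = 0 := by
  have hm := m.2
  simp only [kMod, if_neg hx, Submodule.mem_bot] at hm
  exact hm

/-- The interval module `k_I` of a convex subset `I ⊆ P`: one-dimensional with
identity structure maps on `I`, and zero outside of `I`. -/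
noncomputable def intervalModule {P : Type} [Preorder P] (I : Set P) (hI : IsConvex I) :
    PersistenceModule k P where
  V x := kMod k I x
  map h := intervalMap k I h
  map_refl x := by
    ext m
    by_cases hx : x ∈ I
    · simp [intervalMap, hx]
    · simp [intervalMap, hx, kMod_coe_eq_zero k hx m]
  map_trans {x y z} hxy hyz := by
    ext m
    by_cases hz : z ∈ I
    · by_cases hy : y ∈ I
      · simp [intervalMap, hz, hy]
      · have hx : x ∉ I := fun hx => hy (hI x y z hxy hyz hx hz)
        simp [intervalMap, hz, hy, kMod_coe_eq_zero k hx m]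
    · by_cases hy : y ∈ I <;> simp [intervalMap, hz, hy]

/-- The constant persistence module `k_P` with value `k` everywhere. -/
def constModule (P : Type) [Preorder P] : PersistenceModule k P where
  V _ := k
  map _ := LinearMap.id
  map_refl _ := rfl
  map_trans _ _ := rfl

variable {k}

/-- Connectedness of a subset of a preordered set: any two points are joined by
a finite zigzag of comparable points inside the subset. -/
def IsConn {P : Type} [Preorder P] (I : Set P) : Prop :=
  ∀ p ∈ I, ∀ q ∈ I, ∃ (n : ℕ) (r : ℕ → P), r 0 = p ∧ r n = q ∧ (∀ i ≤ n, r i ∈ I) ∧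
    ∀ i < n, r i ≤ r (i + 1) ∨ r (i + 1) ≤ r i

/-- An interval in a poset: a nonempty convex connected subset. -/
def IsInterval {P : Type} [Preorder P] (I : Set P) : Prop :=
  I.Nonempty ∧ IsConvex I ∧ IsConn I

/-- An ideal: a subset closed under going down. -/
def IsIdeal {P : Type} [Preorder P] (I : Set P) : Prop :=
  ∀ p q : P, p ≤ q → q ∈ I → p ∈ I

/-- A filter: a subset closed under going up. -/
def IsFilter {P : Type} [Preorder P] (I : Set P) : Prop :=
  ∀ p q : P, p ≤ q → p ∈ I → q ∈ I

/-- An interval in a totally ordered set: a nonempty convex subset. -/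
def IsIntervalLin {P : Type} [Preorder P] (I : Set P) : Prop :=
  I.Nonempty ∧ IsConvex I

theorem IsConvex.prod {S T : Type} [Preorder S] [Preorder T] {A : Set S} {B : Set T}
    (hA : IsConvex A) (hB : IsConvex B) : IsConvex (A ×ˢ B) := by
  intro p q r hpq hqr hp hr
  exact ⟨hA _ _ _ hpq.1 hqr.1 hp.1 hr.1, hB _ _ _ hpq.2 hqr.2 hp.2 hr.2⟩

theorem isConvex_univ {P : Type} [Preorder P] : IsConvex (Set.univ : Set P) :=
  fun _ _ _ _ _ _ _ => trivial

/-- A block in the product of two totally ordered sets. -/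
def IsBlock {S T : Type} [LinearOrder S] [LinearOrder T] (I : Set (S × T)) : Prop :=
  I.Nonempty ∧ (
    (∃ JS JT, IsIntervalLin JS ∧ IsIdeal JS ∧ IsIntervalLin JT ∧ IsIdeal JT ∧ I = JS ×ˢ JT) ∨
    (∃ JS JT, IsIntervalLin JS ∧ IsFilter JS ∧ IsIntervalLin JT ∧ IsFilter JT ∧ I = JS ×ˢ JT) ∨
    (∃ JS, IsIntervalLin JS ∧ I = JS ×ˢ (Set.univ : Set T)) ∨
    (∃ JT, IsIntervalLin JT ∧ I = (Set.univ : Set S) ×ˢ JT))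

theorem IsBlock.isConvex {S T : Type} [LinearOrder S] [LinearOrder T] {I : Set (S × T)}
    (h : IsBlock I) : IsConvex I := by
  obtain ⟨-, h | h | h | h⟩ := h
  · obtain ⟨JS, JT, hS, -, hT, -, rfl⟩ := h
    exact hS.2.prod hT.2
  · obtain ⟨JS, JT, hS, -, hT, -, rfl⟩ := h
    exact hS.2.prod hT.2
  · obtain ⟨JS, hS, rfl⟩ := h
    exact hS.2.prod isConvex_univ
  · obtain ⟨JT, hT, rfl⟩ := h
    exact isConvex_univ.prod hT.2

/-- Convexity is inherited by preimages in a subposet. -/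
theorem IsConvex.preimage {P : Type} [Preorder P] {J : Set P} (hJ : IsConvex J)
    (Q : Set P) : IsConvex {p : Q | (p : P) ∈ J} :=
  fun p q r hpq hqr hp hr => hJ p q r hpq hqr hp hr

/-- The restriction of a persistence module to a subposet. -/
def restrict {P : Type} [Preorder P] (M : PersistenceModule k P) (Q : Set P) :
    PersistenceModule k Q where
  V q := M.V q
  map h := M.map h
  map_refl q := M.map_refl q
  map_trans hxy hyz := M.map_trans hxy hyz

/-- Middle exactness for persistence modules over a product of two totally ordered sets:
for every rectangle `a = (x,y) ≤ b = (x,y'), c = (x',y) ≤ d = (x',y')` the sequence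
`M_a → M_b ⊕ M_c → M_d` is exact at `M_b ⊕ M_c`. -/
def MiddleExact {S T : Type} [Preorder S] [Preorder T]
    (M : PersistenceModule k (S × T)) : Prop :=
  ∀ (x x' : S) (y y' : T) (hx : x ≤ x') (hy : y ≤ y')
    (mb : M.V (x, y')) (mc : M.V (x', y)),
    M.map (show (x, y') ≤ (x', y') from ⟨hx, le_refl y'⟩) mb =
      M.map (show (x', y) ≤ (x', y') from ⟨le_refl x', hy⟩) mc →
    ∃ ma : M.V (x, y),
      M.map (show (x, y) ≤ (x, y') from ⟨le_refl x, hy⟩) ma = mb ∧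
      M.map (show (x, y) ≤ (x', y) from ⟨hx, le_refl y⟩) ma = mc


theorem IsIdeal.isConvex {P : Type} [Preorder P] {I : Set P} (h : IsIdeal I) : IsConvex I :=
  fun _ q r _ hqr _ hr => h q r hqr hr

theorem IsFilter.isConvex {P : Type} [Preorder P] {I : Set P} (h : IsFilter I) : IsConvex I :=
  fun p q _ hpq _ hp _ => h p q hpq hp


/-- Convexity of the preimage of a convex subset of `T` in a subposet of `S × T`. -/
theorem IsConvex.preimageSnd {S T : Type} [Preorder S] [Preorder T] {J : Set T}
    (hJ : IsConvex J) (Q : Set (S × T)) : IsConvex {p : ↥Q | (p : S × T).2 ∈ J} :=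
  fun p q r hpq hqr hp hr =>
    hJ _ _ _ (Subtype.coe_le_coe.mpr hpq).2 (Subtype.coe_le_coe.mpr hqr).2 hp hr

end PMod

namespace PMod

/-- The strictly upper-triangular subset of the plane. -/
def upperT : Set (ℝ × ℝ) := {p | 0 < p.1 + p.2}

/-- The upper-triangular subset of the plane. -/
def upperTbar : Set (ℝ × ℝ) := {p | 0 ≤ p.1 + p.2}

/-- Middle exactness for a persistence module over a subposet `Q ⊆ ℝ²`: for every
rectangle `a = (x,y)`, `b = (x,y')`, `c = (x',y)`, `d = (x',y')` with all corners in
`Q`, the sequence `M_a → M_b ⊕ M_c → M_d` is exact at `M_b ⊕ M_c`. -/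
def MiddleExactSub {k : Type} [Field k] (Q : Set (ℝ × ℝ))
    (M : PersistenceModule k ↥Q) : Prop :=
  ∀ (x x' y y' : ℝ) (hx : x ≤ x') (hy : y ≤ y')
    (ha : (x, y) ∈ Q) (hb : (x, y') ∈ Q) (hc : (x', y) ∈ Q) (hd : (x', y') ∈ Q),
    ∀ (mb : M.V ⟨(x, y'), hb⟩) (mc : M.V ⟨(x', y), hc⟩),
      M.map (show (⟨(x, y'), hb⟩ : ↥Q) ≤ ⟨(x', y'), hd⟩ from
        Subtype.mk_le_mk.mpr ⟨hx, le_refl y'⟩) mb =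
      M.map (show (⟨(x', y), hc⟩ : ↥Q) ≤ ⟨(x', y'), hd⟩ from
        Subtype.mk_le_mk.mpr ⟨le_refl x', hy⟩) mc →
      ∃ ma : M.V ⟨(x, y), ha⟩,
        M.map (show (⟨(x, y), ha⟩ : ↥Q) ≤ ⟨(x, y'), hb⟩ from
          Subtype.mk_le_mk.mpr ⟨le_refl x, hy⟩) ma = mb ∧
        M.map (show (⟨(x, y), ha⟩ : ↥Q) ≤ ⟨(x', y), hc⟩ from
          Subtype.mk_le_mk.mpr ⟨hx, le_refl y⟩) ma = mc

/-- Convexity of the preimage in a subposet of a convex subset of `ℝ²`. -/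
theorem IsConvex.preimageSub {J : Set (ℝ × ℝ)} (hJ : IsConvex J) (Q : Set (ℝ × ℝ)) :
    IsConvex {p : ↥Q | (p : ℝ × ℝ) ∈ J} :=
  fun p q r hpq hqr hp hr =>
    hJ _ _ _ (Subtype.coe_le_coe.mpr hpq) (Subtype.coe_le_coe.mpr hqr) hp hr

end PMod

namespace PMod

section LinearSystem

/-- Compactness for linear systems: a system of equations on a functional which is
finitely solvable is solvable. -/
theorem exists_functional {k W ι : Type} [Field k] [AddCommGroup W] [Module k W]
    (w : ι → W) (c : ι → k)
    (H : ∀ F : Finset ι, ∃ φ : W →ₗ[k] k, ∀ j ∈ F, φ (w j) = c j) :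
    ∃ φ : W →ₗ[k] k, ∀ j, φ (w j) = c j := by
  classical
  let L : (ι →₀ k) →ₗ[k] W := Finsupp.linearCombination k w
  let C : (ι →₀ k) →ₗ[k] k := Finsupp.linearCombination k c
  have hker : LinearMap.ker L ≤ LinearMap.ker C := by
    intro l hl
    rw [LinearMap.mem_ker] at hl ⊢
    obtain ⟨φ, hφ⟩ := H l.support
    have h1 : φ (L l) = C l := by
      simp only [L, C, Finsupp.linearCombination_apply, Finsupp.sum, map_sum, map_smul]
      exact Finset.sum_congr rfl fun j hj => by rw [hφ j hj]
    rw [← h1, hl, map_zero]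
  let C' : LinearMap.range L →ₗ[k] k :=
    ((LinearMap.ker L).liftQ C hker).comp L.quotKerEquivRange.symm.toLinearMap
  obtain ⟨φ, hφ⟩ := C'.exists_extend
  refine ⟨φ, fun j => ?_⟩
  have h1 : L (Finsupp.single j 1) = w j := by simp [L]
  have h2 : C (Finsupp.single j 1) = c j := by simp [C]
  have h3 : C' ⟨L (Finsupp.single j 1), LinearMap.mem_range_self _ _⟩ =
      C (Finsupp.single j 1) := by
    have : L.quotKerEquivRange.symm ⟨L (Finsupp.single j 1), LinearMap.mem_range_self _ _⟩ =
        (LinearMap.ker L).mkQ (Finsupp.single j 1) := by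
      rw [LinearEquiv.symm_apply_eq]
      ext
      simp [LinearMap.quotKerEquivRange_apply_mk]
    simp only [C', LinearMap.comp_apply, LinearEquiv.coe_coe, this]
    simp
  have h4 := LinearMap.congr_fun hφ ⟨L (Finsupp.single j 1), LinearMap.mem_range_self _ _⟩
  simp only [LinearMap.comp_apply, Submodule.subtype_apply] at h4
  rw [← h1, ← h2, ← h3, ← h4]

/-- The same with equations between two values of the functional. -/
theorem exists_functional_pair {k W ι : Type} [Field k] [AddCommGroup W] [Module k W]
    (w w' : ι → W) (c : ι → k)
    (H : ∀ F : Finset ι, ∃ φ : W →ₗ[k] k, ∀ j ∈ F, φ (w j) = φ (w' j) + c j) :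
    ∃ φ : W →ₗ[k] k, ∀ j, φ (w j) = φ (w' j) + c j := by
  obtain ⟨φ, hφ⟩ := exists_functional (fun j => w j - w' j) c (fun F => by
    obtain ⟨φ, hφ⟩ := H F
    exact ⟨φ, fun j hj => by rw [map_sub, hφ j hj, add_sub_cancel_left]⟩)
  refine ⟨φ, fun j => ?_⟩
  rw [← hφ j, map_sub, add_sub_cancel]

end LinearSystem

theorem map_map {k P : Type} [Field k] [Preorder P] (M : PersistenceModule k P)
    {x y z : P} (hxy : x ≤ y) (hyz : y ≤ z) (v : M.V x) :
    M.map hyz (M.map hxy v) = M.map (le_trans hxy hyz) v := by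
  rw [M.map_trans hxy hyz]; rfl

theorem map_self {k P : Type} [Field k] [Preorder P] (M : PersistenceModule k P)
    {x : P} (h : x ≤ x) (v : M.V x) : M.map h v = v := by
  rw [M.map_refl x]; rfl

/-- A split embedding of a nonzero module into an indecomposable one is an isomorphism. -/
theorem iso_of_split {k P : Type} [Field k] [Preorder P] {M N : PersistenceModule k P}
    (hind : Indecomposable M) (hN : ¬ IsZero N) (i : Hom N M) (p : Hom M N)
    (hpi : ∀ x v, p.app x (i.app x v) = v) : Isomorphic M N := by
  have pnat : ∀ {x y : P} (h : x ≤ y) (v : M.V x), N.map h (p.app x v) = p.app y (M.map h v) :=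
    fun h v => LinearMap.congr_fun (p.natural h) v
  have inat : ∀ {x y : P} (h : x ≤ y) (v : N.V x), M.map h (i.app x v) = i.app y (N.map h v) :=
    fun h v => LinearMap.congr_fun (i.natural h) v
  let K : PersistenceModule k P :=
    { V := fun x => LinearMap.ker (p.app x)
      map := fun {x y} h => (M.map h).restrict (by
        intro v hv
        rw [LinearMap.mem_ker] at hv ⊢
        rw [← pnat h, hv, map_zero])
      map_refl := fun x => by
        ext v
        simp [map_self]
      map_trans := fun {x y z} hxy hyz => by
        ext v
        simp [map_map] }
  let g : ∀ x, M.V x →ₗ[k] K.V x := fun x =>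
    (LinearMap.id - (i.app x).comp (p.app x)).codRestrict (LinearMap.ker (p.app x)) (by
      intro v
      simp [hpi])
  let f : Hom M (sum2 N K) :=
    { app := fun x => (p.app x).prod (g x)
      natural := fun {x y} h => by
        refine LinearMap.ext fun v => Prod.ext ?_ (Subtype.ext ?_)
        · exact pnat h v
        · have : M.map h (v - i.app x (p.app x v)) =
              M.map h v - i.app y (p.app y (M.map h v)) := by
            rw [map_sub, inat, pnat]
          exact this }
  have hf : IsIsoHom f := by
    intro x
    constructor
    · rw [injective_iff_map_eq_zero]
      intro v hv
      have h1 : p.app x v = 0 := congrArg Prod.fst hv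
      have h2 : v - i.app x (p.app x v) = 0 := congrArg (fun t => (t.2 : LinearMap.ker (p.app x)).1) hv
      rwa [h1, map_zero, sub_zero] at h2
    · rintro ⟨n, ⟨w, hw⟩⟩
      rw [LinearMap.mem_ker] at hw
      refine ⟨i.app x n + w, Prod.ext ?_ (Subtype.ext ?_)⟩
      · change p.app x (i.app x n + w) = n
        rw [map_add, hpi, hw, add_zero]
      · change (i.app x n + w) - i.app x (p.app x (i.app x n + w)) = w
        rw [map_add, hpi, hw, add_zero]
        abel
  rcases hind.2 N K ⟨f, hf⟩ with h | h
  · exact absurd h hN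
  · refine ⟨p, fun x => ⟨?_, fun n => ⟨_, hpi x n⟩⟩⟩
    rw [injective_iff_map_eq_zero]
    intro v hv
    have := h x (⟨v, hv⟩ : LinearMap.ker (p.app x))
    exact congrArg Subtype.val this

/-- Middle exactness in terms of points. -/
theorem MiddleExactSub.points {k : Type} [Field k] {M : PersistenceModule k ↥upperT}
    (hme : MiddleExactSub upperT M) (a b c d : ↥upperT)
    (h1 : a.1.1 = b.1.1) (h2 : c.1.1 = d.1.1) (h3 : a.1.2 = c.1.2) (h4 : b.1.2 = d.1.2)
    (hab : a ≤ b) (hac : a ≤ c) (hbd : b ≤ d) (hcd : c ≤ d) (mb : M.V b) (mc : M.V c)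
    (h : M.map hbd mb = M.map hcd mc) :
    ∃ ma : M.V a, M.map hab ma = mb ∧ M.map hac ma = mc := by
  obtain ⟨⟨a1, a2⟩, ha⟩ := a
  obtain ⟨⟨b1, b2⟩, hb⟩ := b
  obtain ⟨⟨c1, c2⟩, hc⟩ := c
  obtain ⟨⟨d1, d2⟩, hd⟩ := d
  dsimp only at h1 h2 h3 h4
  subst h1 h2 h3 h4
  exact hme a1 c1 a2 b2 hac.1 hab.2 ha hb hc hd mb mc h

/-- Extension of a compatible family from an upset to a finite grid. -/
theorem extend_grid {k : Type} [Field k] {M : PersistenceModule k ↥upperT}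
    (hme : MiddleExactSub upperT M) (X Y : Finset ℝ) (G : Set ↥upperT)
    (hG : ∀ p q, p ≤ q → p ∈ G → q ∈ G) (f₀ : ∀ q, M.V q)
    (hf₀ : ∀ q q' (h : q ≤ q'), q ∈ G → M.map h (f₀ q) = f₀ q')
    (hX : ∀ q : ↥upperT, q ∉ G → ∃ s ∈ X, q.1.1 < s)
    (hY : ∀ q : ↥upperT, q ∉ G → ∃ s ∈ Y, q.1.2 < s) :
    ∀ (n : ℕ) (U : Finset ↥upperT), U.card = n →
      (∀ q ∈ U, q ∉ G ∧ q.1.1 ∈ X ∧ q.1.2 ∈ Y) →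
      (∀ p q : ↥upperT, p ∈ U → p ≤ q → q.1.1 ∈ X → q.1.2 ∈ Y → q ∈ G ∨ q ∈ U) →
      ∃ f : ∀ q, M.V q, (∀ q ∈ G, f q = f₀ q) ∧
        ∀ q q' (h : q ≤ q'), (q ∈ G ∨ q ∈ U) → (q' ∈ G ∨ q' ∈ U) →
          q'.1.1 ∈ X → q'.1.2 ∈ Y → M.map h (f q) = f q' := by
  classical
  intro n
  induction n with
  | zero =>
    intro U hU _ _
    rw [Finset.card_eq_zero] at hU
    subst hU
    refine ⟨f₀, fun _ _ => rfl, fun q q' h hq _ _ _ => hf₀ q q' h ?_⟩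
    simpa using hq
  | succ n ih =>
    intro U hU hUG hup
    have hne : U.Nonempty := by
      rw [← Finset.card_pos, hU]; exact Nat.succ_pos n
    obtain ⟨q₀, hq₀, hmin⟩ := U.exists_minimal hne
    obtain ⟨hq₀G, hq₀X, hq₀Y⟩ := hUG q₀ hq₀
    have hlow : ∀ p, (p ∈ G ∨ p ∈ U) → p ≤ q₀ → p = q₀ := by
      intro p hp hle
      rcases hp with hp | hp
      · exact absurd (hG _ _ hle hp) hq₀G
      · exact le_antisymm hle (hmin hp hle)
    obtain ⟨f, hfG, hf⟩ := ih (U.erase q₀) (by rw [Finset.card_erase_of_mem hq₀, hU]; rfl)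
      (fun q hq => hUG q (Finset.mem_of_mem_erase hq)) (by
        intro p q hp hpq hqX hqY
        rcases hup p q (Finset.mem_of_mem_erase hp) hpq hqX hqY with h | h
        · exact Or.inl h
        · refine Or.inr (Finset.mem_erase.2 ⟨?_, h⟩)
          rintro rfl
          exact (Finset.mem_erase.1 hp).1 (hlow p (Or.inr (Finset.mem_of_mem_erase hp)) hpq))
    -- next grid coordinates
    obtain ⟨s, hsX, hs, hsmin⟩ : ∃ s ∈ X, q₀.1.1 < s ∧ ∀ s' ∈ X, q₀.1.1 < s' → s ≤ s' := by
      obtain ⟨s, hs, hlt⟩ := hX q₀ hq₀G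
      have hne' : (X.filter (q₀.1.1 < ·)).Nonempty := ⟨s, by simp [hs, hlt]⟩
      have hm := Finset.min'_mem _ hne'
      rw [Finset.mem_filter] at hm
      exact ⟨_, hm.1, hm.2, fun s' h1 h2 => Finset.min'_le _ _ (by simp [h1, h2])⟩
    obtain ⟨t, htY, ht, htmin⟩ : ∃ s ∈ Y, q₀.1.2 < s ∧ ∀ s' ∈ Y, q₀.1.2 < s' → s ≤ s' := by
      obtain ⟨s, hs, hlt⟩ := hY q₀ hq₀G
      have hne' : (Y.filter (q₀.1.2 < ·)).Nonempty := ⟨s, by simp [hs, hlt]⟩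
      have hm := Finset.min'_mem _ hne'
      rw [Finset.mem_filter] at hm
      exact ⟨_, hm.1, hm.2, fun s' h1 h2 => Finset.min'_le _ _ (by simp [h1, h2])⟩
    have hpos : 0 < q₀.1.1 + q₀.1.2 := q₀.2
    let b : ↥upperT := ⟨(q₀.1.1, t), by change 0 < q₀.1.1 + t; linarith⟩
    let c : ↥upperT := ⟨(s, q₀.1.2), by change 0 < s + q₀.1.2; linarith⟩
    let d : ↥upperT := ⟨(s, t), by change 0 < s + t; linarith⟩
    have hab : q₀ ≤ b := ⟨le_refl _, ht.le⟩
    have hac : q₀ ≤ c := ⟨hs.le, le_refl _⟩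
    have hbd : b ≤ d := ⟨hs.le, le_refl _⟩
    have hcd : c ≤ d := ⟨le_refl _, ht.le⟩
    have hmem : ∀ q : ↥upperT, q₀ ≤ q → q ≠ q₀ → q.1.1 ∈ X → q.1.2 ∈ Y →
        q ∈ G ∨ q ∈ U.erase q₀ := by
      intro q h hne h1 h2
      rcases hup q₀ q hq₀ h h1 h2 with h | h
      · exact Or.inl h
      · exact Or.inr (Finset.mem_erase.2 ⟨hne, h⟩)
    have hb : b ∈ G ∨ b ∈ U.erase q₀ := hmem b hab (by
      intro h; have : t = q₀.1.2 := congrArg (fun z : ↥upperT => z.1.2) h; linarith) hq₀X htY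
    have hc : c ∈ G ∨ c ∈ U.erase q₀ := hmem c hac (by
      intro h; have : s = q₀.1.1 := congrArg (fun z : ↥upperT => z.1.1) h; linarith) hsX hq₀Y
    have hd : d ∈ G ∨ d ∈ U.erase q₀ := hmem d (hab.trans hbd) (by
      intro h; have : s = q₀.1.1 := congrArg (fun z : ↥upperT => z.1.1) h; linarith) hsX htY
    obtain ⟨v, hvb, hvc⟩ := hme.points q₀ b c d rfl rfl rfl rfl hab hac hbd hcd (f b) (f c)
      (by rw [hf b d hbd hb hd hsX htY, hf c d hcd hc hd hsX htY])
    refine ⟨Function.update f q₀ v, ?_, ?_⟩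
    · intro q hq
      have : q ≠ q₀ := by rintro rfl; exact hq₀G hq
      rw [Function.update_of_ne this, hfG q hq]
    · intro q q' h hq hq' hq'X hq'Y
      by_cases hqq : q = q₀
      · subst hqq
        by_cases hqq' : q' = q
        · subst hqq'
          rw [map_self]
        · rw [Function.update_self, Function.update_of_ne hqq']
          have hq'2 : q' ∈ G ∨ q' ∈ U.erase q := by
            rcases hq' with h | h
            · exact Or.inl h
            · exact Or.inr (Finset.mem_erase.2 ⟨hqq', h⟩)
          rcases lt_or_eq_of_le (show q.1.1 ≤ q'.1.1 from h.1) with h1 | h1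
          · have hcq : c ≤ q' := ⟨hsmin _ hq'X h1, h.2⟩
            rw [← hf c q' hcq hc hq'2 hq'X hq'Y, ← hvc, map_map]
          · rcases lt_or_eq_of_le (show q.1.2 ≤ q'.1.2 from h.2) with h2 | h2
            · have hbq : b ≤ q' := ⟨h.1, htmin _ hq'Y h2⟩
              rw [← hf b q' hbq hb hq'2 hq'X hq'Y, ← hvb, map_map]
            · exact absurd (Subtype.ext (Prod.ext h1.symm h2.symm)) hqq'
      · have hqq' : q' ≠ q₀ := by
          rintro rfl
          exact hqq (hlow q hq h)
        rw [Function.update_of_ne hqq, Function.update_of_ne hqq']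
        refine hf q q' h ?_ ?_ hq'X hq'Y
        · rcases hq with h | h
          · exact Or.inl h
          · exact Or.inr (Finset.mem_erase.2 ⟨hqq, h⟩)
        · rcases hq' with h | h
          · exact Or.inl h
          · exact Or.inr (Finset.mem_erase.2 ⟨hqq', h⟩)


/-- Extension of a compatible family from an upset to the whole poset. -/
theorem exists_section {k : Type} [Field k] {M : PersistenceModule k ↥upperT}
    (hfd : ∀ p, FiniteDimensional k (M.V p))
    (hme : MiddleExactSub upperT M) (G : Set ↥upperT)
    (hG : ∀ p q, p ≤ q → p ∈ G → q ∈ G) (f₀ : ∀ q, M.V q)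
    (hf₀ : ∀ q q' (h : q ≤ q'), q ∈ G → M.map h (f₀ q) = f₀ q') (x₁ y₁ : ℝ)
    (hX : ∀ q : ↥upperT, q ∉ G → q.1.1 < x₁)
    (hY : ∀ q : ↥upperT, q ∉ G → q.1.2 < y₁) :
    ∃ f : ∀ q, M.V q, (∀ q ∈ G, f q = f₀ q) ∧
      ∀ q q' (h : q ≤ q'), M.map h (f q) = f q' := by
  classical
  let J : Type := (Σ q : G, (M.V q.1 →ₗ[k] k)) ⊕
    (Σ r : {r : ↥upperT × ↥upperT // r.1 ≤ r.2}, (M.V r.1.2 →ₗ[k] k))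
  let w : J → Π₀ q : ↥upperT, (M.V q →ₗ[k] k) := fun j => match j with
    | Sum.inl ⟨q, ξ⟩ => DFinsupp.single q.1 ξ
    | Sum.inr ⟨r, ξ⟩ => DFinsupp.single r.1.1 (ξ.comp (M.map r.2))
  let w' : J → Π₀ q : ↥upperT, (M.V q →ₗ[k] k) := fun j => match j with
    | Sum.inl _ => 0
    | Sum.inr ⟨r, ξ⟩ => DFinsupp.single r.1.2 ξ
  let c : J → k := fun j => match j with
    | Sum.inl ⟨q, ξ⟩ => ξ (f₀ q.1)
    | Sum.inr _ => 0
  let pts : J → Finset ↥upperT := fun j => match j with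
    | Sum.inl _ => ∅
    | Sum.inr ⟨r, _⟩ => {r.1.1, r.1.2}
  obtain ⟨φ, hφ⟩ := exists_functional_pair (k := k) w w' c (by
    intro F
    let P := F.biUnion pts
    let X := insert x₁ (P.image fun q => q.1.1)
    let Y := insert y₁ (P.image fun q => q.1.2)
    have hfin : {q : ↥upperT | q ∉ G ∧ q.1.1 ∈ X ∧ q.1.2 ∈ Y}.Finite := by
      refine Set.Finite.of_finite_image (f := Subtype.val)
        (Set.Finite.subset (X ×ˢ Y).finite_toSet ?_) Subtype.val_injective.injOn
      rintro _ ⟨q, ⟨-, h1, h2⟩, rfl⟩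
      simp only [Finset.mem_coe, Finset.mem_product]
      exact ⟨h1, h2⟩
    obtain ⟨f, hfG, hf⟩ := extend_grid hme X Y G hG f₀ hf₀
      (fun q hq => ⟨x₁, Finset.mem_insert_self _ _, hX q hq⟩)
      (fun q hq => ⟨y₁, Finset.mem_insert_self _ _, hY q hq⟩) _ hfin.toFinset rfl
      (fun q hq => by simpa using hq) (by
        intro p q _ _ h1 h2
        by_cases hq : q ∈ G
        · exact Or.inl hq
        · exact Or.inr (by rw [Set.Finite.mem_toFinset]; exact ⟨hq, h1, h2⟩))
    have hPX : ∀ q ∈ P, q.1.1 ∈ X ∧ q.1.2 ∈ Y := fun q hq =>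
      ⟨Finset.mem_insert_of_mem (Finset.mem_image_of_mem _ hq),
        Finset.mem_insert_of_mem (Finset.mem_image_of_mem _ hq)⟩
    have hP : ∀ q ∈ P, q ∈ G ∨ q ∈ hfin.toFinset := by
      intro q hq
      by_cases hqG : q ∈ G
      · exact Or.inl hqG
      · exact Or.inr (by rw [Set.Finite.mem_toFinset]; exact ⟨hqG, hPX q hq⟩)
    let L : (Π₀ q : ↥upperT, (M.V q →ₗ[k] k)) →ₗ[k] k :=
      DFinsupp.lsum ℕ (fun q => LinearMap.applyₗ (f q))
    have hL : ∀ (q : ↥upperT) (ξ : M.V q →ₗ[k] k), L (DFinsupp.single q ξ) = ξ (f q) := by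
      intro q ξ
      simp [L]
    refine ⟨L, ?_⟩
    rintro (⟨q, ξ⟩ | ⟨r, ξ⟩) hj
    · simp only [w, w', c]
      rw [map_zero, zero_add, hL, hfG q.1 q.2]
    · have h1 : r.1.1 ∈ P := Finset.mem_biUnion.2 ⟨_, hj, by simp [pts]⟩
      have h2 : r.1.2 ∈ P := Finset.mem_biUnion.2 ⟨_, hj, by simp [pts]⟩
      have h3 := hf r.1.1 r.1.2 r.2 (hP _ h1) (hP _ h2) (hPX _ h2).1 (hPX _ h2).2
      simp only [w, w', c]
      rw [hL, hL, LinearMap.comp_apply, h3, add_zero])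
  have key : ∀ q : ↥upperT, ∃ v : M.V q, ∀ ξ : (M.V q →ₗ[k] k),
      ξ v = φ (DFinsupp.single q ξ) := by
    intro q
    have := hfd q
    refine ⟨(Module.evalEquiv k (M.V q)).symm (φ.comp (DFinsupp.lsingle (M := fun q => M.V q →ₗ[k] k) q)), fun ξ => ?_⟩
    rw [Module.apply_evalEquiv_symm_apply]
    rfl
  choose f hf using key
  have ext_dual : ∀ (q : ↥upperT) (v v' : M.V q),
      (∀ ξ : (M.V q →ₗ[k] k), ξ v = ξ v') → v = v' := by
    intro q v v' h
    exact Module.forall_dual_apply_eq_zero_iff k (v - v') |>.1 (fun ξ => by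
      rw [map_sub, h, sub_self]) |> sub_eq_zero.1
  refine ⟨f, fun q hq => ext_dual q _ _ fun ξ => ?_, fun q q' h => ext_dual q' _ _ fun ξ => ?_⟩
  · rw [hf]
    have h1 := hφ (Sum.inl ⟨⟨q, hq⟩, ξ⟩)
    simp only [w, w', c] at h1
    rwa [map_zero, zero_add] at h1
  · have h1 := hφ (Sum.inr ⟨⟨(q, q'), h⟩, ξ⟩)
    simp only [w, w', c] at h1
    rw [← hf, ← hf, add_zero] at h1
    exact h1

/-- A compatible family which is nonzero on a directed set admits a compatible family of
functionals taking the value one on it. -/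
theorem exists_cosection {k P : Type} [Field k] [PartialOrder P] (M : PersistenceModule k P)
    (I : Set P) (hne : I.Nonempty)
    (hdir : ∀ p ∈ I, ∀ q ∈ I, ∃ r ∈ I, p ≤ r ∧ q ≤ r)
    (f : ∀ q, M.V q) (hf : ∀ q q' (h : q ≤ q'), M.map h (f q) = f q')
    (hf0 : ∀ q ∈ I, f q ≠ 0) :
    ∃ φ : ∀ q, M.V q →ₗ[k] k,
      (∀ q q' (h : q ≤ q'), q' ∈ I → ∀ v, φ q' (M.map h v) = φ q v) ∧
      ∀ q ∈ I, φ q (f q) = 1 := by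
  classical
  obtain ⟨a, ha⟩ := hne
  let J : Type := I ⊕ (Σ r : {r : P × P // r.1 ≤ r.2 ∧ r.2 ∈ I}, M.V r.1.1)
  let w : J → Π₀ q : P, M.V q := fun j => match j with
    | Sum.inl q => DFinsupp.single q.1 (f q.1)
    | Sum.inr ⟨r, v⟩ => DFinsupp.single r.1.2 (M.map r.2.1 v) - DFinsupp.single r.1.1 v
  let c : J → k := fun j => match j with
    | Sum.inl _ => 1
    | Sum.inr _ => 0
  let pt : J → I := fun j => match j with
    | Sum.inl q => q
    | Sum.inr ⟨r, _⟩ => ⟨r.1.2, r.2.2⟩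
  obtain ⟨φ, hφ⟩ := exists_functional (k := k) w c (by
    intro F
    obtain ⟨r, hr, hFr⟩ : ∃ r ∈ I, ∀ j ∈ F, (pt j).1 ≤ r := by
      induction F using Finset.induction_on with
      | empty => exact ⟨a, ha, by simp⟩
      | insert j F _ ih =>
        obtain ⟨r, hr, h⟩ := ih
        obtain ⟨r', hr', h1, h2⟩ := hdir r hr (pt j).1 (pt j).2
        refine ⟨r', hr', fun i hi => ?_⟩
        rcases Finset.mem_insert.1 hi with rfl | hi
        · exact h2
        · exact (h i hi).trans h1
    obtain ⟨ψ, hψ⟩ := Module.Projective.exists_dual_ne_zero k (hf0 r hr)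
    refine ⟨DFinsupp.lsum ℕ (fun q =>
      if h : q ≤ r then ((ψ (f r))⁻¹ • ψ).comp (M.map h) else 0), ?_⟩
    rintro (q | ⟨s, v⟩) hj
    · have h1 : q.1 ≤ r := hFr _ hj
      simp [w, c, h1, hf, hψ]
    · have h1 : s.1.2 ≤ r := hFr _ hj
      have h2 : s.1.1 ≤ r := s.2.1.trans h1
      simp [w, c, h1, h2, map_map])
  refine ⟨fun q => φ.comp (DFinsupp.lsingle q), ?_, ?_⟩
  · intro q q' h hq' v
    have h1 := hφ (Sum.inr ⟨⟨(q, q'), h, hq'⟩, v⟩)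
    have h2 : φ (DFinsupp.single q' (M.map h v)) - φ (DFinsupp.single q v) = 0 := by
      rw [← map_sub]; exact h1
    exact sub_eq_zero.1 h2
  · intro q hq
    exact hφ (Sum.inl ⟨q, hq⟩)

/-- The criterion: a compatible family supported exactly on a directed down-set. -/
theorem iso_interval {k P : Type} [Field k] [PartialOrder P] (M : PersistenceModule k P)
    (hind : Indecomposable M) (I : Set P) (hI : IsConvex I) (hne : I.Nonempty)
    (hdown : ∀ p q, p ≤ q → q ∈ I → p ∈ I)
    (hdir : ∀ p ∈ I, ∀ q ∈ I, ∃ r ∈ I, p ≤ r ∧ q ≤ r)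
    (f : ∀ q, M.V q) (hf : ∀ q q' (h : q ≤ q'), M.map h (f q) = f q')
    (hf1 : ∀ q ∈ I, f q ≠ 0) (hf0 : ∀ q, q ∉ I → f q = 0) :
    Isomorphic M (intervalModule k I hI) := by
  classical
  obtain ⟨φ, hφ, hφ1⟩ := exists_cosection M I hne hdir f hf hf1
  let i : Hom (intervalModule k I hI) M :=
    { app := fun q => (LinearMap.toSpanSingleton k (M.V q) (f q)).comp (kMod k I q).subtype
      natural := fun {q q'} h => by
        refine LinearMap.ext fun v => ?_
        change M.map h ((v : kMod k I q).1 • f q) = (intervalMap k I h v).1 • f q'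
        rw [map_smul, hf]
        by_cases hq' : q' ∈ I
        · simp [intervalMap, hq']
        · simp [hf0 q' hq'] }
  have hmem : ∀ q v, (if q ∈ I then φ q else 0) v ∈ kMod k I q := by
    intro q v
    by_cases hq : q ∈ I
    · rw [if_pos hq, kMod, if_pos hq]; exact Submodule.mem_top
    · rw [if_neg hq]; exact Submodule.zero_mem _
  let p : Hom M (intervalModule k I hI) :=
    { app := fun q => LinearMap.codRestrict (kMod k I q) (if q ∈ I then φ q else 0) (hmem q)
      natural := fun {q q'} h => by
        refine LinearMap.ext fun v => Subtype.ext ?_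
        change (intervalMap k I h _).1 = (if q' ∈ I then φ q' else 0) (M.map h v)
        by_cases hq' : q' ∈ I
        · have hq := hdown q q' h hq'
          rw [if_pos hq', hφ q q' h hq']
          simp only [intervalMap, LinearMap.coe_mk, AddHom.coe_mk, dif_pos hq']
          change (if q ∈ I then φ q else 0) v = φ q v
          rw [if_pos hq]
        · simp [intervalMap, hq'] }
  refine iso_of_split hind ?_ i p ?_
  · obtain ⟨a, ha⟩ := hne
    intro h
    have := congrArg Subtype.val (h a (kGen k ha))
    exact one_ne_zero this
  · intro q v
    refine Subtype.ext ?_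
    change (if q ∈ I then φ q else 0) ((v : kMod k I q).1 • f q) = (v : kMod k I q).1
    by_cases hq : q ∈ I
    · simp [hq, hφ1 q hq]
    · rw [kMod_coe_eq_zero k hq v]; simp

end PMod

open PMod in
/-- Lemma 4.9: an indecomposable pointwise finite-dimensional middle exact module over
the strictly upper-triangular subposet of the plane with a nonzero common kernel
element is the restriction of a block module of type (db). -/
theorem stmt19 {k : Type} [Field k] (M : PersistenceModule k ↥upperT)
    (hfd : ∀ p, FiniteDimensional k (M.V p)) (hme : MiddleExactSub upperT M)
    (hind : Indecomposable M)
    (x x' y y' : ℝ) (hx : x ≤ x') (hy : y ≤ y')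
    (ha : (x, y) ∈ upperT) (hb : (x, y') ∈ upperT) (hc : (x', y) ∈ upperT)
    (hker : ∃ m : M.V ⟨(x, y), ha⟩, m ≠ 0 ∧
      M.map (show (⟨(x, y), ha⟩ : ↥upperT) ≤ ⟨(x, y'), hb⟩ from
        Subtype.mk_le_mk.mpr ⟨le_refl x, hy⟩) m = 0 ∧
      M.map (show (⟨(x, y), ha⟩ : ↥upperT) ≤ ⟨(x', y), hc⟩ from
        Subtype.mk_le_mk.mpr ⟨hx, le_refl y⟩) m = 0) :
    ∃ (JS JT : Set ℝ)
      (h : (IsIntervalLin JS ∧ IsIdeal JS) ∧ (IsIntervalLin JT ∧ IsIdeal JT)),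
      Isomorphic M (intervalModule k {p : ↥upperT | (p : ℝ × ℝ) ∈ JS ×ˢ JT}
        ((h.1.1.2.prod h.2.1.2).preimageSub upperT)) := by
  classical
  obtain ⟨m₀, hm₀, hm₀b, hm₀c⟩ := hker
  let a : ↥upperT := ⟨(x, y), ha⟩
  have hpos : 0 < x + y := ha
  let cx : ℝ → ↥upperT := fun u => ⟨(max u x, y), by
    change 0 < max u x + y; linarith [le_max_right u x]⟩
  let cy : ℝ → ↥upperT := fun t => ⟨(x, max t y), by
    change 0 < x + max t y; linarith [le_max_right t y]⟩
  let cd : ℝ → ℝ → ↥upperT := fun u t => ⟨(max u x, max t y), by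
    change 0 < max u x + max t y; linarith [le_max_right t y, le_max_right u x]⟩
  have hacx : ∀ u, a ≤ cx u := fun u => ⟨le_max_right _ _, le_refl _⟩
  have hacy : ∀ t, a ≤ cy t := fun t => ⟨le_refl _, le_max_right _ _⟩
  have hxd : ∀ u t, cx u ≤ cd u t := fun u t => ⟨le_refl _, le_max_right _ _⟩
  have hyd : ∀ u t, cy t ≤ cd u t := fun u t => ⟨le_max_right _ _, le_refl _⟩
  let A : ℝ → Submodule k (M.V a) := fun u => LinearMap.ker (M.map (hacx u))
  let B : ℝ → Submodule k (M.V a) := fun t => LinearMap.ker (M.map (hacy t))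
  have ker_mono : ∀ {p q : ↥upperT} (h1 : a ≤ p) (h2 : p ≤ q) (v : M.V a),
      M.map h1 v = 0 → M.map (h1.trans h2) v = 0 := by
    intro p q h1 h2 v hv
    rw [← map_map M h1 h2, hv, map_zero]
  have Amono : ∀ {u u' : ℝ}, u ≤ u' → A u ≤ A u' := fun {u u'} h v hv =>
    ker_mono (hacx u) (show cx u ≤ cx u' from ⟨max_le_max_right _ h, le_refl _⟩) v hv
  have Bmono : ∀ {t t' : ℝ}, t ≤ t' → B t ≤ B t' := fun {t t'} h v hv =>
    ker_mono (hacy t) (show cy t ≤ cy t' from ⟨le_refl _, max_le_max_right _ h⟩) v hv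
  have hm₀A : m₀ ∈ A x' := ker_mono (p := ⟨(x', y), hc⟩) (q := cx x')
    ⟨hx, le_refl _⟩ ⟨le_max_left _ _, le_refl _⟩ m₀ hm₀c
  have hm₀B : m₀ ∈ B y' := ker_mono (p := ⟨(x, y'), hb⟩) (q := cy y')
    ⟨le_refl _, hy⟩ ⟨le_refl _, le_max_left _ _⟩ m₀ hm₀b
  -- minimal choice of the vertical kernel
  have := hfd a
  have hex : ∃ n : ℕ, ∃ t, Module.finrank k (B t) = n ∧ ∃ m ∈ A x', m ∈ B t ∧ m ≠ 0 :=
    ⟨_, y', rfl, m₀, hm₀A, hm₀B, hm₀⟩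
  obtain ⟨t₀, ht₀, m, hmA, hmB, hm⟩ := Nat.find_spec hex
  have hmin : ∀ t, B t < B t₀ → ∀ v ∈ A x', v ∈ B t → v = 0 := by
    intro t hlt v hvA hvB
    by_contra hv
    have h1 := Submodule.finrank_lt_finrank_of_lt hlt
    rw [ht₀] at h1
    exact Nat.find_min hex h1 ⟨t, rfl, v, hvA, hvB, hv⟩
  let JS : Set ℝ := {u | m ∉ A u}
  let JT : Set ℝ := {t | m ∉ B t}
  have hJS : IsIdeal JS := fun p q h hq hp => hq (Amono h hp)
  have hJT : IsIdeal JT := fun p q h hq hp => hq (Bmono h hp)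
  have hxJ : x ∈ JS := by
    intro h
    have h1 := ker_mono (hacx x) (show cx x ≤ a from ⟨by simp [cx, a], le_refl _⟩) m h
    rw [map_self] at h1
    exact hm h1
  have hyJ : y ∈ JT := by
    intro h
    have h1 := ker_mono (hacy y) (show cy y ≤ a from ⟨le_refl _, by simp [cy, a]⟩) m h
    rw [map_self] at h1
    exact hm h1
  have hS : ∀ u ∈ JS, u < x' := by
    intro u hu
    by_contra hle
    exact hu (Amono (not_lt.1 hle) hmA)
  have hT : ∀ t ∈ JT, t < t₀ := by
    intro t ht
    by_contra hle
    exact ht (Bmono (not_lt.1 hle) hmB)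
  refine ⟨JS, JT, ⟨⟨⟨⟨x, hxJ⟩, hJS.isConvex⟩, hJS⟩, ⟨⟨⟨y, hyJ⟩, hJT.isConvex⟩, hJT⟩⟩, ?_⟩
  -- the image of `m` is nonzero inside the block
  have hnz : ∀ u ∈ JS, ∀ t ∈ JT, M.map ((hacx u).trans (hxd u t)) m ≠ 0 := by
    intro u hu t ht h0
    obtain ⟨n, hnb, hnc⟩ := hme.points a (cy t) (cx u) (cd u t) rfl rfl rfl rfl
      (hacy t) (hacx u) (hyd u t) (hxd u t) (M.map (hacy t) m) 0
      (by rw [map_zero, map_map]; exact h0)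
    have hnA : n ∈ A u := hnc
    have hmn : m - n ∈ B t := by
      change M.map (hacy t) (m - n) = 0
      rw [map_sub, hnb, sub_self]
    have hlt : B t < B t₀ := lt_of_le_of_ne (Bmono (hT t ht).le) (fun h => ht (h ▸ hmB))
    have h1 := hmin t hlt (m - n) (Submodule.sub_mem _ hmA (Amono (hS u hu).le hnA)) hmn
    exact hu (sub_eq_zero.1 h1 ▸ hnA)
  let I : Set ↥upperT := {p : ↥upperT | (p : ℝ × ℝ) ∈ JS ×ˢ JT}
  have hdown : ∀ p q : ↥upperT, p ≤ q → q ∈ I → p ∈ I := fun p q h hq =>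
    ⟨hJS _ _ h.1 hq.1, hJT _ _ h.2 hq.2⟩
  -- the image of `m` vanishes outside the block
  have hz : ∀ q (h : a ≤ q), q ∉ I → M.map h m = 0 := by
    intro q h hq
    by_cases h1 : q.1.1 ∈ JS
    · have h2 : q.1.2 ∉ JT := fun h2 => hq ⟨h1, h2⟩
      exact ker_mono (hacy q.1.2) (show cy q.1.2 ≤ q from ⟨h.1, max_le (le_refl _) h.2⟩) m
        (not_not.1 h2)
    · exact ker_mono (hacx q.1.1) (show cx q.1.1 ≤ q from ⟨max_le (le_refl _) h.1, h.2⟩) m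
        (not_not.1 h1)
  let G : Set ↥upperT := {q | a ≤ q ∨ q ∉ I}
  let f₀ : ∀ q, M.V q := fun q => if h : a ≤ q then M.map h m else 0
  have hf₀0 : ∀ q, q ∉ I → f₀ q = 0 := by
    intro q hq
    by_cases h : a ≤ q
    · simp only [f₀, dif_pos h]; exact hz q h hq
    · simp only [f₀, dif_neg h]
  have hf₀a : ∀ q (h : a ≤ q), f₀ q = M.map h m := fun q h => dif_pos h
  obtain ⟨f, hfG, hf⟩ := exists_section hfd hme G
    (by
      rintro p q h (hp | hp)
      · exact Or.inl (hp.trans h)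
      · exact Or.inr fun hq => hp (hdown p q h hq))
    f₀
    (by
      rintro q q' h (hq | hq)
      · rw [hf₀a q hq, hf₀a q' (hq.trans h), map_map]
      · rw [hf₀0 q hq, hf₀0 q' (fun hq' => hq (hdown q q' h hq')), map_zero])
    x' t₀
    (fun q hq => hS _ (not_not.1 (not_or.1 hq).2).1)
    (fun q hq => hT _ (not_not.1 (not_or.1 hq).2).2)
  have max_mem : ∀ {J : Set ℝ} {u v : ℝ}, u ∈ J → v ∈ J → max u v ∈ J := by
    intro J u v hu hv
    rcases max_choice u v with h | h <;> rw [h] <;> assumption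
  refine iso_interval M hind I _ ⟨a, hxJ, hyJ⟩ hdown ?_ f hf ?_ ?_
  · intro p hp q hq
    refine ⟨⟨(max p.1.1 q.1.1, max p.1.2 q.1.2), ?_⟩,
      ⟨max_mem hp.1 hq.1, max_mem hp.2 hq.2⟩,
      ⟨le_max_left _ _, le_max_left _ _⟩, ⟨le_max_right _ _, le_max_right _ _⟩⟩
    have hp0 : 0 < p.1.1 + p.1.2 := p.2
    change 0 < max p.1.1 q.1.1 + max p.1.2 q.1.2
    linarith [le_max_left p.1.1 q.1.1, le_max_left p.1.2 q.1.2]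
  · intro q hq h0
    have har : a ≤ cd q.1.1 q.1.2 := (hacx _).trans (hxd _ _)
    have hqr : q ≤ cd q.1.1 q.1.2 := ⟨le_max_left _ _, le_max_left _ _⟩
    have h1 := hf q _ hqr
    rw [h0, map_zero, hfG _ (Or.inl har), hf₀a _ har] at h1
    exact hnz q.1.1 hq.1 q.1.2 hq.2 h1.symm
  · intro q hq
    rw [hfG q (Or.inr hq), hf₀0 q hq]
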